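/- Let d ≥ 1, k ∈ ℕ, ρ > 0, and let p, q ∈ [1, +∞) satisfy p ≤ q and 1/q ≥ 1/p − 1/d. There exists a constant C > 0 depending only on d, ρ, k, q and p such that the following holds. Let Ω ⊆ ℝ^d be open and bounded, and let T_1, …, T_n be finitely many pairwise disjoint open subsets of Ω, each T_i with diameter h_{T_i} star-shaped with respect to a ball of radius ρ·h_{T_i}, such that Ω ∖ (T_1 ∪ … ∪ T_n) has Lebesgue measure zero; set h = max_i h_{T_i}. Let w : Ω → ℝ be such that for each i there is a polynomial w_i : ℝ^d → ℝ of total degree at most k with w = w_i on T_i and ∫_{T_i} w_i(x) dx = 0. Then ‖w‖_{L^q(Ω)} ≤ C · h^{1 + d/q − d/p} · ( Σ_{i=1}^n ‖∇w_i‖_{L^p(T_i; ℝ^d)}^p )^{1/p}. -/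

import Mathlib

open MeasureTheory Metric Set
open scoped ENNReal

noncomputable section

/-- `w : ℝ^d → ℝ` is (given by) a multivariate polynomial of total degree at most `k`. -/
def IsPolyDegLE (d k : ℕ) (w : EuclideanSpace ℝ (Fin d) → ℝ) : Prop :=
  ∃ P : MvPolynomial (Fin d) ℝ, P.totalDegree ≤ k ∧ ∀ x, w x = MvPolynomial.eval (fun i => x i) P

/-- `T` is star-shaped with respect to a ball of radius `ρ * diam T`. -/
def StarShapedWrtBall {d : ℕ} (ρ : ℝ) (T : Set (EuclideanSpace ℝ (Fin d))) : Prop :=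
  ∃ c, Metric.ball c (ρ * Metric.diam T) ⊆ T ∧
    ∀ x ∈ Metric.ball c (ρ * Metric.diam T), ∀ y ∈ T, segment ℝ x y ⊆ T

abbrev EE (d : ℕ) := EuclideanSpace ℝ (Fin d)

/-- The space of polynomial functions of degree at most `k`. -/
def polySpace (d k : ℕ) : Submodule ℝ (EE d → ℝ) :=
  (MvPolynomial.restrictTotalDegree (Fin d) ℝ k).map
    (LinearMap.pi fun x : EE d => (MvPolynomial.aeval (R := ℝ) (fun i => x i)).toLinearMap)

instance (d k : ℕ) : FiniteDimensional ℝ (polySpace d k) := by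
  unfold polySpace; infer_instance

lemma mem_polySpace {d k : ℕ} {w : EE d → ℝ} : w ∈ polySpace d k ↔ IsPolyDegLE d k w := by
  unfold polySpace IsPolyDegLE
  simp only [Submodule.mem_map, MvPolynomial.mem_restrictTotalDegree]
  constructor
  · rintro ⟨P, hP, rfl⟩
    exact ⟨P, hP, fun x => by simp [MvPolynomial.aeval_eq_eval]⟩
  · rintro ⟨P, hP, h⟩
    exact ⟨P, hP, by ext x; simp [h, MvPolynomial.aeval_eq_eval]⟩

lemma IsPolyDegLE.analytic {d k : ℕ} {w : EE d → ℝ} (h : IsPolyDegLE d k w) :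
    AnalyticOnNhd ℝ w univ := by
  obtain ⟨P, -, h⟩ := h
  have : w = fun x : EE d => MvPolynomial.aeval (fun i => x i) P := by
    ext x; rw [h, MvPolynomial.aeval_eq_eval]
  rw [this]
  exact AnalyticOnNhd.aeval_mvPolynomial
    (fun i x _ => (EuclideanSpace.proj (𝕜 := ℝ) i : EE d →L[ℝ] ℝ).analyticAt x) P

lemma IsPolyDegLE.differentiable {d k : ℕ} {w : EE d → ℝ} (h : IsPolyDegLE d k w) :
    Differentiable ℝ w := fun x => (h.analytic x trivial).differentiableAt

lemma IsPolyDegLE.analytic_fderiv {d k : ℕ} {w : EE d → ℝ} (h : IsPolyDegLE d k w) :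
    AnalyticOnNhd ℝ (fderiv ℝ w) univ := h.analytic.fderiv

lemma IsPolyDegLE.continuous_fderiv {d k : ℕ} {w : EE d → ℝ} (h : IsPolyDegLE d k w) :
    Continuous (fderiv ℝ w) := h.analytic_fderiv.continuous

lemma IsPolyDegLE.affine {d k : ℕ} {w : EE d → ℝ} (hw : IsPolyDegLE d k w) (c : EE d) (h : ℝ) :
    IsPolyDegLE d k (fun y => w (c + h • y)) := by
  obtain ⟨P, hP, hw⟩ := hw
  refine ⟨MvPolynomial.bind₁
    (fun i => MvPolynomial.C (c i) + MvPolynomial.C h * MvPolynomial.X i) P, ?_, ?_⟩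
  · rw [MvPolynomial.bind₁, MvPolynomial.aeval_def, MvPolynomial.eval₂_eq]
    refine MvPolynomial.totalDegree_finsetSum_le fun m hm => ?_
    refine (MvPolynomial.totalDegree_mul _ _).trans ?_
    rw [MvPolynomial.algebraMap_eq, MvPolynomial.totalDegree_C, zero_add]
    refine (MvPolynomial.totalDegree_finsetProd _ _).trans ?_
    refine le_trans ?_ ((MvPolynomial.le_totalDegree hm).trans hP)
    refine Finset.sum_le_sum fun i _ => ?_
    refine (MvPolynomial.totalDegree_pow _ _).trans ?_
    refine (Nat.mul_le_mul_left _ (?_ : _ ≤ 1)).trans (by simp)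
    refine (MvPolynomial.totalDegree_add _ _).trans (max_le (by simp) ?_)
    refine (MvPolynomial.totalDegree_mul _ _).trans (by simp)
  · intro x
    change w (c + h • x) = _
    rw [hw, ← MvPolynomial.coe_aeval_eq_eval, ← MvPolynomial.coe_aeval_eq_eval]
    simp only [RingHom.coe_coe]
    rw [MvPolynomial.aeval_bind₁]
    simp

lemma memLp_of_cont {d : ℕ} {F : Type*} [NormedAddCommGroup F] 
    [SecondCountableTopologyEither (EE d) F] {f : EE d → F} (hf : Continuous f)
    {T : Set (EE d)} (hT : Bornology.IsBounded T) (p : ℝ≥0∞) :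
    MemLp f p (volume.restrict T) := by
  have hc : IsCompact (closure T) := hT.isCompact_closure
  obtain ⟨C, hC⟩ := hc.exists_bound_of_continuousOn hf.continuousOn
  have : MemLp f p (volume.restrict (closure T)) := by
    have : IsFiniteMeasure (volume.restrict (closure T)) :=
      ⟨by rw [Measure.restrict_apply_univ]; exact hc.measure_lt_top⟩
    refine MemLp.of_bound hf.aestronglyMeasurable C ?_
    exact (ae_restrict_mem isClosed_closure.measurableSet).mono fun x hx => hC x hx
  exact this.mono_measure (Measure.restrict_mono subset_closure le_rfl)

lemma exists_bound_of_ker {V X Y : Type*} [AddCommGroup V] [Module ℝ V] [FiniteDimensional ℝ V]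
    [NormedAddCommGroup X] [NormedSpace ℝ X] [NormedAddCommGroup Y] [NormedSpace ℝ Y]
    (A : V →ₗ[ℝ] X) (B : V →ₗ[ℝ] Y) (hker : ∀ f, A f = 0 → B f = 0) :
    ∃ C : ℝ, 0 < C ∧ ∀ f, ‖B f‖ ≤ C * ‖A f‖ := by
  obtain ⟨s, hs⟩ := A.rangeRestrict.exists_rightInverse_of_surjective A.range_rangeRestrict
  let L := LinearMap.toContinuousLinearMap (B.comp s)
  refine ⟨‖L‖ + 1, by positivity, fun f => ?_⟩
  have e1 : B f = L (A.rangeRestrict f) := by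
    have h1 : A (f - s (A.rangeRestrict f)) = 0 := by
      have h2 : A (s (A.rangeRestrict f)) = A f :=
        congrArg Subtype.val (LinearMap.congr_fun hs (A.rangeRestrict f))
      rw [map_sub, h2, sub_self]
    have := hker _ h1
    rw [map_sub, sub_eq_zero] at this
    exact this
  calc ‖B f‖ ≤ ‖L‖ * ‖A.rangeRestrict f‖ := by rw [e1]; exact L.le_opNorm _
    _ = ‖L‖ * ‖A f‖ := rfl
    _ ≤ _ := by gcongr; linarith

lemma ref_bound (d k : ℕ) (ρ : ℝ) (hρ : 0 < ρ) (p : ℝ≥0∞) (hp : 1 ≤ p) :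
    ∃ C : ℝ, 0 < C ∧ ∀ f : EE d → ℝ, IsPolyDegLE d k f → ∀ x ∈ closedBall (0 : EE d) 1,
      ‖fderiv ℝ f x‖ₑ ≤ ENNReal.ofReal C *
        eLpNorm (fderiv ℝ f) p (volume.restrict (ball 0 ρ)) := by
  have : Fact (1 ≤ p) := ⟨hp⟩
  have hm : ∀ f : polySpace d k, MemLp (fderiv ℝ (f : EE d → ℝ)) p (volume.restrict (ball 0 ρ)) :=
    fun f => memLp_of_cont (mem_polySpace.1 f.2).continuous_fderiv isBounded_ball p
  have hadd : ∀ f g : polySpace d k, fderiv ℝ ((f + g : polySpace d k) : EE d → ℝ)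
      = fderiv ℝ (f : EE d → ℝ) + fderiv ℝ (g : EE d → ℝ) := by
    intro f g
    ext1 x
    exact fderiv_add ((mem_polySpace.1 f.2).differentiable x)
      ((mem_polySpace.1 g.2).differentiable x)
  have hsmul : ∀ (r : ℝ) (f : polySpace d k), fderiv ℝ ((r • f : polySpace d k) : EE d → ℝ)
      = r • fderiv ℝ (f : EE d → ℝ) := by
    intro r f
    ext1 x
    exact fderiv_const_smul ((mem_polySpace.1 f.2).differentiable x) r
  let A : polySpace d k →ₗ[ℝ] Lp (EE d →L[ℝ] ℝ) p (volume.restrict (ball (0 : EE d) ρ)) :=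
    { toFun := fun f => (hm f).toLp _
      map_add' := fun f g => by
        rw [← MemLp.toLp_add]; congr 1; exact hadd f g
      map_smul' := fun r f => by
        rw [RingHom.id_apply, ← MemLp.toLp_const_smul]; congr 1; exact hsmul r f }
  let B : polySpace d k →ₗ[ℝ] C(closedBall (0 : EE d) 1, EE d →L[ℝ] ℝ) :=
    { toFun := fun f => ⟨fun x => fderiv ℝ (f : EE d → ℝ) x,
        (mem_polySpace.1 f.2).continuous_fderiv.comp continuous_subtype_val⟩
      map_add' := fun f g => by
        ext1 x; exact congrFun (hadd f g) x
      map_smul' := fun r f => by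
        ext1 x; exact congrFun (hsmul r f) x }
  have hker : ∀ f, A f = 0 → B f = 0 := by
    intro f hf
    have h1 : fderiv ℝ (f : EE d → ℝ) =ᵐ[volume.restrict (ball (0 : EE d) ρ)] 0 :=
      (MemLp.toLp_eq_toLp_iff (hm f) MemLp.zero).1 (by rw [MemLp.toLp_zero]; exact hf)
    have h2 : EqOn (fderiv ℝ (f : EE d → ℝ)) 0 (ball (0 : EE d) ρ) :=
      Measure.eqOn_open_of_ae_eq h1 isOpen_ball
        (mem_polySpace.1 f.2).continuous_fderiv.continuousOn continuousOn_const
    have h3 : EqOn (fderiv ℝ (f : EE d → ℝ)) 0 univ :=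
      (mem_polySpace.1 f.2).analytic_fderiv.eqOn_of_preconnected_of_eventuallyEq
        analyticOnNhd_const isPreconnected_univ (mem_univ 0)
        (Filter.eventuallyEq_of_mem (ball_mem_nhds 0 hρ) h2)
    ext1 x
    exact h3 (mem_univ _)
  obtain ⟨K, hK, hAB⟩ := exists_bound_of_ker (Y := C(closedBall (0 : EE d) 1, EE d →L[ℝ] ℝ)) A B hker
  refine ⟨K, hK, fun f hf x hx => ?_⟩
  let f' : polySpace d k := ⟨f, mem_polySpace.2 hf⟩
  have e2 : ‖fderiv ℝ f x‖ ≤ K * ‖A f'‖ := by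
    calc ‖fderiv ℝ f x‖ = ‖B f' ⟨x, hx⟩‖ := rfl
      _ ≤ ‖B f'‖ := (B f').norm_coe_le_norm _
      _ ≤ _ := hAB f'
  have e3 : ENNReal.ofReal ‖A f'‖ = eLpNorm (fderiv ℝ f) p (volume.restrict (ball 0 ρ)) := by
    have : ‖A f'‖ = (eLpNorm (fderiv ℝ f) p (volume.restrict (ball 0 ρ))).toReal :=
      Lp.norm_toLp _ (hm f')
    rw [this, ENNReal.ofReal_toReal (hm f').2.ne]
  rw [← e3, ← ENNReal.ofReal_mul (by positivity), ← ofReal_norm]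
  exact ENNReal.ofReal_le_ofReal e2

lemma scaled_bound (d k : ℕ) (ρ : ℝ) (hρ : 0 < ρ) (p : ℝ) (hp : 1 ≤ p) :
    ∃ C : ℝ, 0 < C ∧ ∀ f : EE d → ℝ, IsPolyDegLE d k f → ∀ (c : EE d) (h : ℝ), 0 < h →
      ∀ x ∈ closedBall c h,
      ‖fderiv ℝ f x‖ₑ ≤ ENNReal.ofReal (C * ((h ^ d)⁻¹) ^ (1 / p)) *
        eLpNorm (fderiv ℝ f) (ENNReal.ofReal p) (volume.restrict (ball c (ρ * h))) := by
  obtain ⟨C, hC, H⟩ := ref_bound d k ρ hρ (ENNReal.ofReal p) (by simpa using hp)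
  refine ⟨C, hC, fun f hf c h hh x hx => ?_⟩
  have hd : ∀ y, fderiv ℝ (fun y => f (c + h • y)) y = h • fderiv ℝ f (c + h • y) := by
    intro y
    have h1 : HasFDerivAt (fun y : EE d => c + h • y) (h • ContinuousLinearMap.id ℝ (EE d)) y :=
      ((hasFDerivAt_id y).const_smul h).const_add c
    have h2 := (hf.differentiable (c + h • y)).hasFDerivAt.comp y h1
    refine h2.fderiv.trans ?_
    ext v; simp
  have key := H _ (hf.affine c h) (h⁻¹ • (x - c)) (by
    rw [mem_closedBall, dist_eq_norm] at hx
    rw [mem_closedBall, dist_zero_right, norm_smul, norm_inv, Real.norm_of_nonneg hh.le,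
      inv_mul_le_iff₀ hh]
    simpa using hx)
  rw [hd, smul_inv_smul₀ hh.ne', add_sub_cancel] at key
  have hfun : fderiv ℝ (fun y => f (c + h • y)) = h • (fderiv ℝ f ∘ fun y => c + h • y) := by
    ext1 y; exact hd y
  have hme : Measurable (fun y : EE d => c + h • y) := by fun_prop
  have hmap : Measure.map (fun y : EE d => c + h • y) (volume.restrict (ball 0 ρ))
      = ENNReal.ofReal ((h ^ d)⁻¹) • volume.restrict (ball c (ρ * h)) := by
    have hpre : (fun y : EE d => c + h • y) ⁻¹' (ball c (ρ * h)) = ball 0 ρ := by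
      ext y
      simp only [mem_preimage, mem_ball, dist_self_add_left, dist_zero_right, norm_smul,
        Real.norm_of_nonneg hh.le]
      rw [mul_comm ρ, mul_lt_mul_iff_right₀ hh]
    have hfull : Measure.map (fun y : EE d => c + h • y) volume
        = ENNReal.ofReal ((h ^ d)⁻¹) • volume := by
      have : (fun y : EE d => c + h • y) = (fun z => c + z) ∘ (fun y => h • y) := rfl
      rw [this, ← Measure.map_map (by fun_prop) (by fun_prop),
        Measure.map_addHaar_smul _ hh.ne', Measure.map_smul, map_add_left_eq_self]
      simp [abs_of_pos hh]
    rw [← hpre, ← Measure.restrict_map hme measurableSet_ball, hfull, Measure.restrict_smul]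
  have hcs : eLpNorm (h • (fderiv ℝ f ∘ fun y => c + h • y)) (ENNReal.ofReal p)
      (volume.restrict (ball 0 ρ)) = ‖h‖ₑ * eLpNorm (fderiv ℝ f ∘ fun y => c + h • y)
      (ENNReal.ofReal p) (volume.restrict (ball 0 ρ)) :=
    eLpNorm_const_smul (𝕜 := ℝ) (F := EE d →L[ℝ] ℝ) h _ _ _
  rw [hfun, hcs, ← eLpNorm_map_measure
    hf.continuous_fderiv.aestronglyMeasurable hme.aemeasurable, hmap,
    eLpNorm_smul_measure_of_ne_top ENNReal.ofReal_ne_top, enorm_smul] at key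
  have h0 : ‖h‖ₑ ≠ 0 := by simpa using hh.ne'
  have hpp : 0 ≤ p := by linarith
  rw [mul_left_comm, ENNReal.mul_le_mul_iff_right h0 enorm_ne_top] at key
  refine key.trans (le_of_eq ?_)
  rw [smul_eq_mul, ← mul_assoc, ENNReal.ofReal_mul hC.le, ENNReal.toReal_div, ENNReal.toReal_one,
    ENNReal.toReal_ofReal hpp,
    ENNReal.ofReal_rpow_of_nonneg (by positivity) (by positivity)]

lemma norm_gradient' {d : ℕ} (f : EE d → ℝ) (x : EE d) : ‖gradient f x‖ = ‖fderiv ℝ f x‖ := by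
  unfold gradient; exact LinearIsometryEquiv.norm_map _ _

lemma local_bound (d k : ℕ) (hd : 1 ≤ d) (ρ : ℝ) (hρ : 0 < ρ) (p q : ℝ)
    (hp : 1 ≤ p) (hq : 1 ≤ q) :
    ∃ C : ℝ, 0 < C ∧ ∀ T : Set (EE d), IsOpen T → Bornology.IsBounded T →
      StarShapedWrtBall ρ T → ∀ f, IsPolyDegLE d k f → (∫ x in T, f x) = 0 →
      eLpNorm f (ENNReal.ofReal q) (volume.restrict T) ≤
        ENNReal.ofReal (C * (diam T) ^ (1 + (d : ℝ) / q - (d : ℝ) / p)) *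
          eLpNorm (fun x => gradient f x) (ENNReal.ofReal p) (volume.restrict T) := by
  obtain ⟨C, hC, H⟩ := scaled_bound d k ρ hρ p hp
  have : Nonempty (Fin d) := ⟨⟨0, hd⟩⟩
  set v : ℝ := (volume (ball (0 : EE d) 1)).toReal with hv
  have hvpos : 0 < v := ENNReal.toReal_pos (measure_ball_pos _ _ one_pos).ne' measure_ball_lt_top.ne
  refine ⟨v ^ (1 / q) * C, by positivity, fun T hTo hTb ⟨c, hball, _⟩ f hf hmean => ?_⟩
  rcases T.eq_empty_or_nonempty with rfl | ⟨x₀, hx₀⟩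
  · simp
  set h := diam T with hh
  have hhpos : 0 < h := by
    by_contra h0
    have hs : T.Subsingleton := by
      by_contra hns
      exact h0 (diam_pos (not_subsingleton_iff.1 hns) hTb)
    obtain rfl := hs.eq_singleton_of_mem hx₀
    exact not_isOpen_singleton x₀ hTo
  have hcT : c ∈ T := hball (mem_ball_self (by positivity))
  have hsub : T ⊆ closedBall c h := fun x hx => dist_le_diam_of_mem hTb hx hcT
  set G := eLpNorm (fun x => gradient f x) (ENNReal.ofReal p) (volume.restrict T) with hG
  have hG' : G = eLpNorm (fderiv ℝ f) (ENNReal.ofReal p) (volume.restrict T) :=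
    eLpNorm_congr_norm_ae (Filter.Eventually.of_forall fun x => norm_gradient' f x)
  have hGt : G ≠ ∞ := by
    rw [hG']; exact (memLp_of_cont hf.continuous_fderiv hTb _).2.ne
  set M : ℝ := C * ((h ^ d)⁻¹) ^ (1 / p) * G.toReal with hM
  have hM0 : 0 ≤ M := by positivity
  have hgrad : ∀ x ∈ closedBall c h, ‖fderiv ℝ f x‖ ≤ M := by
    intro x hx
    have h1 := H f hf c h hhpos x hx
    have h2 : ‖fderiv ℝ f x‖ₑ ≤ ENNReal.ofReal M := by
      refine h1.trans ?_
      rw [hM, ENNReal.ofReal_mul (p := C * _) (by positivity), ENNReal.ofReal_toReal hGt, hG']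
      gcongr
    rw [← ofReal_norm] at h2
    exact (ENNReal.ofReal_le_ofReal_iff hM0).1 h2
  have hdiff : ∀ x ∈ T, ∀ y ∈ T, |f x - f y| ≤ M * h := by
    intro x hx y hy
    have := (convex_closedBall c h).norm_image_sub_le_of_norm_fderiv_le (𝕜 := ℝ)
      (fun z _ => hf.differentiable z) hgrad (hsub hy) (hsub hx)
    refine this.trans ?_
    rw [← dist_eq_norm]
    gcongr
    exact dist_le_diam_of_mem hTb hx hy
  have hvol0 : volume T ≠ 0 := (hTo.measure_pos volume ⟨x₀, hx₀⟩).ne'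
  have hvolt : volume T ≠ ∞ := hTb.measure_lt_top.ne
  have hio : IntegrableOn f T := memLp_one_iff_integrable.1
    (memLp_of_cont hf.differentiable.continuous hTb 1)
  have hav : (⨍ x in T, f x) = 0 := by rw [setAverage_eq, hmean, smul_zero]
  obtain ⟨y, hy, hy'⟩ := exists_le_setAverage hvol0 hvolt hio
  obtain ⟨z, hz, hz'⟩ := exists_setAverage_le hvol0 hvolt hio
  rw [hav] at hy' hz'
  have hb : ∀ x ∈ T, ‖f x‖ ≤ M * h := by
    intro x hx
    have h1 := abs_le.1 (hdiff x hx y hy)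
    have h2 := abs_le.1 (hdiff x hx z hz)
    rw [Real.norm_eq_abs, abs_le]
    constructor <;> linarith
  have hfin := eLpNorm_le_of_ae_bound (p := ENNReal.ofReal q) (μ := volume.restrict T)
    ((ae_restrict_mem hTo.measurableSet).mono fun x hx => hb x hx)
  refine hfin.trans ?_
  have hq0 : 0 ≤ q := by linarith
  have hvT : volume T ≤ ENNReal.ofReal (h ^ d * v) := by
    refine (measure_mono hsub).trans ?_
    rw [Measure.addHaar_closedBall _ _ hhpos.le, ENNReal.ofReal_mul (by positivity), hv,
      ENNReal.ofReal_toReal measure_ball_lt_top.ne]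
    simp
  rw [Measure.restrict_apply_univ, ENNReal.toReal_ofReal hq0]
  calc volume T ^ q⁻¹ * ENNReal.ofReal (M * h)
      ≤ ENNReal.ofReal (h ^ d * v) ^ q⁻¹ * ENNReal.ofReal (M * h) := by gcongr
    _ = ENNReal.ofReal ((h ^ d * v) ^ q⁻¹ * (C * ((h ^ d)⁻¹) ^ (1 / p) * h)) * G := by
        rw [ENNReal.ofReal_rpow_of_nonneg (by positivity) (by positivity),
          ENNReal.ofReal_mul (p := (h ^ d * v) ^ q⁻¹) (by positivity), mul_assoc (ENNReal.ofReal _)]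
        congr 1
        conv_rhs => rw [← ENNReal.ofReal_toReal hGt]
        rw [← ENNReal.ofReal_mul (by positivity)]
        congr 1; rw [hM]; ring
    _ = _ := by
        congr 2
        have e1 : h ^ (1 + (d : ℝ) / q - (d : ℝ) / p)
            = h * (h ^ d) ^ q⁻¹ * ((h ^ d)⁻¹) ^ (1 / p) := by
          rw [← Real.rpow_natCast, ← Real.rpow_neg hhpos.le, ← Real.rpow_mul hhpos.le,
            ← Real.rpow_mul hhpos.le, Real.rpow_sub hhpos, Real.rpow_add hhpos, Real.rpow_one,
            div_eq_mul_inv, ← Real.rpow_neg hhpos.le]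
          congr 2 <;> ring
        rw [e1, Real.mul_rpow (by positivity) hvpos.le, one_div q]
        ring

lemma sum_rpow_le' {ι : Type*} (s : Finset ι) (a : ι → ℝ≥0∞) {r : ℝ} (hr : 1 ≤ r) :
    ∑ i ∈ s, a i ^ r ≤ (∑ i ∈ s, a i) ^ r := by
  classical
  induction s using Finset.induction_on with
  | empty => simp
  | insert i s hi ih =>
    rw [Finset.sum_insert hi, Finset.sum_insert hi]
    exact (add_le_add le_rfl ih).trans (ENNReal.add_rpow_le_rpow_add _ _ hr)

/-- Poincaré–Wirtinger–Sobolev inequality for broken polynomial functions with local zero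
averages: `‖w‖_{L^q(Ω)} ≤ C h^{1 + d/q - d/p} ‖∇_h w‖_{L^p(Ω)}`. -/
theorem poincare_wirtinger_sobolev_broken
    (d k : ℕ) (hd : 1 ≤ d) (ρ : ℝ) (hρ : 0 < ρ) (p q : ℝ)
    (hp : 1 ≤ p) (hpq : p ≤ q) (hsob : 1 / p - 1 / (d : ℝ) ≤ 1 / q) :
    ∃ C : ℝ, 0 < C ∧
      ∀ Ω : Set (EuclideanSpace ℝ (Fin d)), IsOpen Ω → Bornology.IsBounded Ω →
      ∀ (n : ℕ) (T : Fin n → Set (EuclideanSpace ℝ (Fin d))),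
        (∀ i, IsOpen (T i)) → (∀ i, T i ⊆ Ω) →
        Pairwise (Function.onFun Disjoint T) →
        (∀ i, StarShapedWrtBall ρ (T i)) →
        volume (Ω \ ⋃ i, T i) = 0 →
      ∀ (w : EuclideanSpace ℝ (Fin d) → ℝ)
        (P : Fin n → EuclideanSpace ℝ (Fin d) → ℝ),
        (∀ i, IsPolyDegLE d k (P i)) →
        (∀ i, Set.EqOn w (P i) (T i)) →
        (∀ i, (∫ x in T i, P i x) = 0) →
        eLpNorm w (ENNReal.ofReal q) (volume.restrict Ω)
          ≤ ENNReal.ofReal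
              (C * (⨆ i, Metric.diam (T i)) ^ (1 + (d : ℝ) / q - (d : ℝ) / p)) *
            (∑ i, (eLpNorm (fun x => gradient (P i) x) (ENNReal.ofReal p)
                (volume.restrict (T i))) ^ p) ^ (1 / p) := by
  have hq : 1 ≤ q := hp.trans hpq
  have hp0 : 0 < p := by linarith
  have hq0 : 0 < q := by linarith
  obtain ⟨C, hC, H⟩ := local_bound d k hd ρ hρ p q hp hq
  refine ⟨C, hC, fun Ω hΩo hΩb n T hTo hTs hdisj hstar hnull w P hP hw hmean => ?_⟩
  set α : ℝ := 1 + (d : ℝ) / q - (d : ℝ) / p with hα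
  have hα0 : 0 ≤ α := by
    have hd0 : (0 : ℝ) < d := by exact_mod_cast hd
    have := mul_le_mul_of_nonneg_left hsob hd0.le
    have e : (d : ℝ) * (1 / p - 1 / d) = d / p - 1 := by field_simp
    rw [e, mul_one_div] at this
    rw [hα]; linarith
  set h : ℝ := ⨆ i, Metric.diam (T i) with hh
  set K : ℝ≥0∞ := ENNReal.ofReal (C * h ^ α) with hK
  set G : Fin n → ℝ≥0∞ := fun i => eLpNorm (fun x => gradient (P i) x) (ENNReal.ofReal p)
                (volume.restrict (T i)) with hG
  have hloc : ∀ i, eLpNorm w (ENNReal.ofReal q) (volume.restrict (T i)) ≤ K * G i := by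
    intro i
    have e : eLpNorm w (ENNReal.ofReal q) (volume.restrict (T i))
        = eLpNorm (P i) (ENNReal.ofReal q) (volume.restrict (T i)) :=
      eLpNorm_congr_ae ((ae_restrict_mem (hTo i).measurableSet).mono fun x hx => hw i hx)
    rw [e]
    refine (H (T i) (hTo i) (hΩb.subset (hTs i)) (hstar i) (P i) (hP i) (hmean i)).trans ?_
    have hle : diam (T i) ≤ h := le_ciSup (f := fun i => diam (T i)) (finite_range _).bddAbove i
    have : diam (T i) ^ α ≤ h ^ α := Real.rpow_le_rpow diam_nonneg hle hα0
    rw [hK]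
    gcongr
  have hqne : ENNReal.ofReal q ≠ 0 := by simpa using hq0
  have hL : ∀ S : Set (EE d), eLpNorm w (ENNReal.ofReal q) (volume.restrict S) ^ q
      = ∫⁻ x in S, ‖w x‖ₑ ^ q := by
    intro S
    rw [eLpNorm_eq_lintegral_rpow_enorm_toReal hqne ENNReal.ofReal_ne_top,
      ENNReal.toReal_ofReal hq0.le, ← ENNReal.rpow_mul, one_div_mul_cancel hq0.ne',
      ENNReal.rpow_one]
  have hres : volume.restrict Ω = volume.restrict (⋃ i, T i) := by
    refine Measure.restrict_congr_set ?_
    refine Filter.EventuallyLE.antisymm ?_ ?_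
    · exact ae_le_set.2 hnull
    · exact (iUnion_subset hTs).eventuallyLE
  have hsum : eLpNorm w (ENNReal.ofReal q) (volume.restrict Ω) ^ q
      ≤ (K * (∑ i, G i ^ p) ^ (1 / p)) ^ q := by
    calc eLpNorm w (ENNReal.ofReal q) (volume.restrict Ω) ^ q
        = ∑ i, eLpNorm w (ENNReal.ofReal q) (volume.restrict (T i)) ^ q := by
          rw [hres, hL, lintegral_iUnion (fun i => (hTo i).measurableSet) hdisj, tsum_fintype]
          simp_rw [hL]
      _ ≤ ∑ i, (K * G i) ^ q := by
          refine Finset.sum_le_sum fun i _ => ENNReal.rpow_le_rpow (hloc i) hq0.le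
      _ = K ^ q * ∑ i, (G i ^ p) ^ (q / p) := by
          rw [Finset.mul_sum]
          refine Finset.sum_congr rfl fun i _ => ?_
          rw [ENNReal.mul_rpow_of_nonneg _ _ hq0.le, ← ENNReal.rpow_mul, mul_div_cancel₀ _ hp0.ne']
      _ ≤ K ^ q * (∑ i, G i ^ p) ^ (q / p) := by
          gcongr
          exact sum_rpow_le' _ _ ((one_le_div hp0).2 hpq)
      _ = _ := by
          rw [ENNReal.mul_rpow_of_nonneg _ _ hq0.le, ← ENNReal.rpow_mul, one_div_mul_eq_div]
  exact (ENNReal.rpow_le_rpow_iff hq0).1 hsum
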